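/- Let q be sufficiently large, χ a real non-principal Dirichlet character mod q, and β a real zero of L(s,χ). Then for every x ≥ q²: ∑_{q² ≤ p ≤ x} (1 + χ(p))·p^{−1} ≤ 2·(1−β)·log x, where the sum is over primes p. -/

import Mathlib

section

open Filter Topology MeasureTheory

/-- The Dirichlet convolution `1 * c`. -/
noncomputable def divisorSum (c : ℕ →*₀ ℝ) (n : ℕ) : ℝ := ∑ d ∈ n.divisors, c d

section divisorSum
variable {c : ℕ →*₀ ℝ}

lemma divisorSum_mul {m n : ℕ} (h : m.Coprime n) :
    divisorSum c (m * n) = divisorSum c m * divisorSum c n := by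
  rw [divisorSum, divisorSum, divisorSum, Nat.divisors_mul, Finset.mul_def,
    Finset.sum_image h.mul_injOn_divisors, Finset.sum_mul_sum, Finset.sum_product]
  simp

lemma divisorSum_prime_pow {p : ℕ} (hp : p.Prime) (k : ℕ) :
    divisorSum c (p ^ k) = ∑ i ∈ Finset.range (k + 1), c p ^ i := by
  simp [divisorSum, Nat.sum_divisors_prime_pow hp]

lemma divisorSum_prime {p : ℕ} (hp : p.Prime) : divisorSum c p = 1 + c p := by
  simp [divisorSum, hp.sum_divisors, add_comm]

lemma divisorSum_nonneg (hc : ∀ n, c n = 0 ∨ c n = 1 ∨ c n = -1) (n : ℕ) :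
    0 ≤ divisorSum c n := by
  induction n using Nat.recOnPosPrimePosCoprime with
  | zero => simp [divisorSum]
  | one => simp [divisorSum]
  | prime_pow p k hp hk =>
    rw [divisorSum_prime_pow hp]
    rcases hc p with h | h | h
    · exact Finset.sum_nonneg fun i _ ↦ by rw [h]; positivity
    · exact Finset.sum_nonneg fun i _ ↦ by rw [h]; positivity
    · rw [h, neg_one_geom_sum]; split_ifs <;> norm_num
  | coprime a b ha hb hab iha ihb =>
    rw [divisorSum_mul hab]; positivity

lemma one_le_divisorSum_sq (hc : ∀ n, c n = 0 ∨ c n = 1 ∨ c n = -1) {n : ℕ} (hn : n ≠ 0) :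
    1 ≤ divisorSum c (n ^ 2) := by
  induction n using Nat.recOnPosPrimePosCoprime with
  | zero => exact absurd rfl hn
  | one => simp [divisorSum]
  | prime_pow p k hp hk =>
    rw [← pow_mul, divisorSum_prime_pow hp]
    rcases hc p with h | h | h
    · rw [h, Finset.sum_range_succ', pow_zero]
      exact le_add_of_nonneg_left (Finset.sum_nonneg fun i _ ↦ by positivity)
    · rw [h]; simp
    · have : ¬ Even (k * 2 + 1) := by simp
      rw [h, neg_one_geom_sum, if_neg this]
  | coprime a b ha hb hab iha ihb =>
    rw [mul_pow, divisorSum_mul (hab.pow 2 2)]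
    exact one_le_mul_of_one_le_of_one_le (iha (by omega)) (ihb (by omega))

end divisorSum

/-- The function `1 / u - 1 / (exp u - 1)`. -/
noncomputable def expGap (u : ℝ) : ℝ := 1 / u - 1 / (Real.exp u - 1)

lemma expGap_nonneg {u : ℝ} (hu : 0 < u) : 0 ≤ expGap u := by
  have := Real.add_one_le_exp u
  rw [expGap, sub_nonneg]
  exact one_div_le_one_div_of_le hu (by linarith)

lemma expGap_le_inv {u : ℝ} (hu : 0 < u) : expGap u ≤ u⁻¹ := by
  have := Real.one_lt_exp_iff.2 hu
  have : 0 ≤ 1 / (Real.exp u - 1) := by apply div_nonneg <;> linarith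
  rw [expGap, one_div u]; linarith

lemma expGap_le_one {u : ℝ} (hu : 0 < u) : expGap u ≤ 1 := by
  have h1 := Real.one_lt_exp_iff.2 hu
  have h2 := Real.one_sub_le_exp_neg u
  rw [Real.exp_neg] at h2
  have h3 : (1 - u) * Real.exp u ≤ 1 := by
    calc _ ≤ (Real.exp u)⁻¹ * Real.exp u := by gcongr
      _ = 1 := inv_mul_cancel₀ (by positivity)
  have h4 : 0 < Real.exp u - 1 := by linarith
  rw [expGap, div_sub_div _ _ hu.ne' h4.ne', div_le_one (by positivity)]
  nlinarith

lemma hasDerivAt_expGap {u : ℝ} (hu : 0 < u) :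
    HasDerivAt expGap (-(u ^ 2)⁻¹ - -Real.exp u / (Real.exp u - 1) ^ 2) u := by
  have h1 := Real.one_lt_exp_iff.2 hu
  have h := (hasDerivAt_inv hu.ne').sub
    (((Real.hasDerivAt_exp u).sub_const 1).fun_inv (by linarith : Real.exp u - 1 > 0).ne')
  refine h.congr_of_eventuallyEq (Eventually.of_forall fun v ↦ ?_)
  simp [expGap]

lemma continuousOn_expGap : ContinuousOn expGap (Set.Ioi 0) :=
  fun _ hu ↦ (hasDerivAt_expGap hu).continuousAt.continuousWithinAt

lemma sq_mul_exp_le_exp_sub_one_sq {u : ℝ} (hu : 0 < u) :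
    u ^ 2 * Real.exp u ≤ (Real.exp u - 1) ^ 2 := by
  have h := Real.self_le_sinh_iff.2 (half_pos hu).le
  rw [Real.sinh_eq] at h
  have h1 : Real.exp u = Real.exp (u / 2) ^ 2 := by rw [← Real.exp_nat_mul]; ring_nf
  have h2 : Real.exp (u / 2) * Real.exp (-(u / 2)) = 1 := by rw [← Real.exp_add]; simp
  have h3 : u * Real.exp (u / 2) ≤ Real.exp u - 1 := by
    rw [h1]; nlinarith [Real.exp_pos (u / 2)]
  calc u ^ 2 * Real.exp u = (u * Real.exp (u / 2)) ^ 2 := by rw [h1]; ring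
    _ ≤ _ := by gcongr

lemma expGap_antitoneOn : AntitoneOn expGap (Set.Ioi 0) := by
  refine antitoneOn_of_deriv_nonpos (convex_Ioi 0) continuousOn_expGap
    (fun u hu ↦ ?_) (fun u hu ↦ ?_) <;> rw [interior_Ioi] at hu
  · exact (hasDerivAt_expGap hu).differentiableAt.differentiableWithinAt
  · have hu : 0 < u := hu
    rw [(hasDerivAt_expGap hu).deriv, neg_div, sub_neg_eq_add, neg_add_nonpos_iff, ← one_div,
      div_le_div_iff₀ (by have := Real.one_lt_exp_iff.2 hu; have : 0 < Real.exp u - 1 := by linarith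
                          positivity) (by positivity)]
    linarith [sq_mul_exp_le_exp_sub_one_sq hu]

lemma divisorSum_le_self {c : ℕ →*₀ ℝ} (hc : ∀ n, |c n| ≤ 1) (n : ℕ) : divisorSum c n ≤ n := by
  calc divisorSum c n ≤ ∑ d ∈ n.divisors, (1 : ℝ) :=
        Finset.sum_le_sum fun d _ ↦ (le_abs_self _).trans (hc d)
    _ = n.divisors.card := by simp
    _ ≤ n := by exact_mod_cast Nat.card_divisors_le_self n

/-- The Abel summation inequality. -/
lemma abs_sum_mul_le_of_antitone {a b : ℕ → ℝ} {M : ℝ}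
    (hM : ∀ N, |∑ n ∈ Finset.range N, a n| ≤ M) (hb : Antitone b) (hb0 : ∀ n, 0 ≤ b n) (N : ℕ) :
    |∑ n ∈ Finset.range N, a n * b n| ≤ M * b 0 := by
  have key : ∀ N, ∑ n ∈ Finset.range N, a n * b n =
      (∑ n ∈ Finset.range N, a n) * b N +
        ∑ k ∈ Finset.range N, (∑ n ∈ Finset.range (k + 1), a n) * (b k - b (k + 1)) := by
    intro N
    induction N with
    | zero => simp
    | succ N ih =>
      rw [Finset.sum_range_succ, ih, Finset.sum_range_succ a N, Finset.sum_range_succ _ N,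
        Finset.sum_range_succ a N]
      ring
  have htel : ∀ N, ∑ k ∈ Finset.range N, (b k - b (k + 1)) = b 0 - b N :=
    fun N ↦ Finset.sum_range_sub' b N
  rw [key]
  calc _ ≤ |∑ n ∈ Finset.range N, a n| * b N +
        ∑ k ∈ Finset.range N, |∑ n ∈ Finset.range (k + 1), a n| * (b k - b (k + 1)) := by
        refine (abs_add_le _ _).trans (add_le_add ?_ ?_)
        · rw [abs_mul, abs_of_nonneg (hb0 N)]
        · refine (Finset.abs_sum_le_sum_abs _ _).trans (Finset.sum_le_sum fun k _ ↦ ?_)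
          rw [abs_mul, abs_of_nonneg (sub_nonneg.2 (hb (Nat.le_succ k)))]
    _ ≤ M * b N + ∑ k ∈ Finset.range N, M * (b k - b (k + 1)) := by
        gcongr with k _
        · exact hb0 N
        · exact hM N
        · exact sub_nonneg.2 (hb (Nat.le_succ k))
        · exact hM _
    _ = M * b 0 := by rw [← Finset.mul_sum, htel]; ring

/-- The generating function `∑ (1 * c)(n) exp (-n t)`. -/
noncomputable def divisorSumExp (c : ℕ →*₀ ℝ) (t : ℝ) : ℝ :=
  ∑' n : ℕ, divisorSum c (n + 1) * Real.exp (-((n + 1 : ℕ) * t))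

lemma summable_divisorSumExp {c : ℕ →*₀ ℝ} (hc : ∀ n, c n = 0 ∨ c n = 1 ∨ c n = -1) {t : ℝ}
    (ht : 0 < t) :
    Summable fun n : ℕ ↦ divisorSum c (n + 1) * Real.exp (-((n + 1 : ℕ) * t)) := by
  have hc1 : ∀ n, |c n| ≤ 1 := fun n ↦ by rcases hc n with h | h | h <;> simp [h]
  have h := (summable_nat_add_iff 1).2 (Real.summable_pow_mul_exp_neg_nat_mul 1 ht)
  refine Summable.of_nonneg_of_le (fun n ↦ mul_nonneg (divisorSum_nonneg hc _) (by positivity))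
    (fun n ↦ ?_) h
  rw [pow_one, show -((n + 1 : ℕ) * t) = -t * (n + 1 : ℕ) by ring]
  gcongr
  exact divisorSum_le_self hc1 _

/-- The Lambert series identity. -/
lemma hasSum_lambert {c : ℕ →*₀ ℝ} (hc : ∀ n, c n = 0 ∨ c n = 1 ∨ c n = -1) {t : ℝ}
    (ht : 0 < t) :
    HasSum (fun n : ℕ ↦ c (n + 1) * (1 / (Real.exp ((n + 1 : ℕ) * t) - 1)))
      (divisorSumExp c t) := by
  have hc1 : ∀ n, |c n| ≤ 1 := fun n ↦ by rcases hc n with h | h | h <;> simp [h]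
  have hgeo : ∀ d : ℕ+, HasSum (fun k : ℕ+ ↦ Real.exp (-((d * k : ℕ) * t)))
      (1 / (Real.exp ((d : ℕ) * t) - 1)) := by
    intro d
    have hd : 0 < (d : ℕ) * t := by have := d.pos; positivity
    have hr : Real.exp (-((d : ℕ) * t)) < 1 := by rw [Real.exp_lt_one_iff]; linarith
    have h := (hasSum_geometric_of_lt_one (Real.exp_pos _).le hr).mul_left
      (Real.exp (-((d : ℕ) * t)))
    rw [← Equiv.pnatEquivNat.symm.hasSum_iff]
    have hfun : (fun k : ℕ+ ↦ Real.exp (-((d * k : ℕ) * t))) ∘ Equiv.pnatEquivNat.symm =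
        fun i ↦ Real.exp (-((d : ℕ) * t)) * Real.exp (-((d : ℕ) * t)) ^ i := by
      ext k
      rw [← Real.exp_nat_mul, ← Real.exp_add]
      simp only [Function.comp, Equiv.pnatEquivNat_symm_apply, Nat.succPNat_coe]
      congr 1; push_cast; ring
    have hval : 1 / (Real.exp ((d : ℕ) * t) - 1) =
        Real.exp (-((d : ℕ) * t)) * (1 - Real.exp (-((d : ℕ) * t)))⁻¹ := by
      have h1 := Real.one_lt_exp_iff.2 hd
      have h2 : Real.exp ((d : ℕ) * t) - 1 ≠ 0 := by linarith
      have h3 : 1 - Real.exp (-((d : ℕ) * t)) ≠ 0 := by linarith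
      have h4 : Real.exp ((d : ℕ) * t) * Real.exp (-((d : ℕ) * t)) = 1 := by
        rw [← Real.exp_add]; simp
      rw [← div_eq_mul_inv, div_eq_div_iff h2 h3]
      linear_combination -h4
    rw [hfun, hval]
    exact h
  let F : ℕ+ × ℕ+ → ℝ := fun x ↦ c x.1 * Real.exp (-((x.1 * x.2 : ℕ) * t))
  have hF : Summable F := by
    have hG : Summable fun x : ℕ+ × ℕ+ ↦ Real.exp (-((x.1 * x.2 : ℕ) * t)) := by
      have hr : ‖Real.exp (-t)‖ < 1 := by simpa using ht
      refine (summable_prod_mul_pow 0 hr).congr fun x ↦ ?_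
      rw [← Real.exp_nat_mul, pow_zero, one_mul]
      congr 1; ring
    refine Summable.of_norm_bounded hG fun x ↦ ?_
    simp only [F, norm_mul, Real.norm_eq_abs, Real.abs_exp]
    exact mul_le_of_le_one_left (Real.exp_pos _).le (hc1 _)
  have h1 : HasSum (fun d : ℕ+ ↦ c d * (1 / (Real.exp ((d : ℕ) * t) - 1))) (∑' x, F x) :=
    hF.hasSum.prod_fiberwise fun d ↦ (hgeo d).mul_left _
  have h2 : HasSum (fun n : ℕ+ ↦ divisorSum c n * Real.exp (-((n : ℕ) * t))) (∑' x, F x) := by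
    have h := sigmaAntidiagonalEquivProd.hasSum_iff.2 hF.hasSum
    refine h.sigma fun n ↦ ?_
    have h := hasSum_fintype fun x : Nat.divisorsAntidiagonal n ↦
      (F ∘ sigmaAntidiagonalEquivProd) ⟨n, x⟩
    have hval : divisorSum c n * Real.exp (-((n : ℕ) * t)) =
        ∑ x : Nat.divisorsAntidiagonal n, (F ∘ sigmaAntidiagonalEquivProd) ⟨n, x⟩ := by
      rw [divisorSum, Finset.sum_mul,
        ← Nat.sum_divisorsAntidiagonal (fun d _ ↦ c d * Real.exp (-((n : ℕ) * t))),
        ← Finset.sum_coe_sort]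
      refine Finset.sum_congr rfl fun x _ ↦ ?_
      have hx := (Nat.mem_divisorsAntidiagonal.1 x.2).1
      simp [F, sigmaAntidiagonalEquivProd, divisorsAntidiagonalFactors, ← hx]
    rw [hval]
    exact h
  rw [← Equiv.pnatEquivNat.symm.hasSum_iff] at h1 h2
  rw [show divisorSumExp c t = ∑' x, F x from h2.tsum_eq]
  exact h1

section meanValue
variable {c : ℕ →*₀ ℝ} {M L : ℝ}

lemma tendsto_sum_mul_expGap (hc : ∀ n, c n = 0 ∨ c n = 1 ∨ c n = -1)
    (hL : Tendsto (fun N ↦ ∑ n ∈ Finset.range N, c (n + 1) / (n + 1 : ℕ)) atTop (𝓝 L))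
    {t : ℝ} (ht : 0 < t) :
    Tendsto (fun N ↦ ∑ n ∈ Finset.range N, c (n + 1) * expGap ((n + 1 : ℕ) * t)) atTop
      (𝓝 (L / t - divisorSumExp c t)) := by
  have h := (hL.div_const t).sub (hasSum_lambert hc ht).tendsto_sum_nat
  refine h.congr fun N ↦ ?_
  rw [Finset.sum_div, ← Finset.sum_sub_distrib]
  refine Finset.sum_congr rfl fun n _ ↦ ?_
  rw [expGap, mul_sub]
  congr 1
  field_simp

lemma antitone_expGap_mul {t : ℝ} (ht : 0 < t) :
    Antitone fun n : ℕ ↦ expGap ((n + 1 : ℕ) * t) := fun m n hmn ↦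
  expGap_antitoneOn (Set.mem_Ioi.2 (by positivity)) (Set.mem_Ioi.2 (by positivity)) (by gcongr)

lemma abs_sum_mul_expGap_le (hM : ∀ N, |∑ n ∈ Finset.range N, c (n + 1)| ≤ M)
    {t : ℝ} (ht : 0 < t) (N : ℕ) :
    |∑ n ∈ Finset.range N, c (n + 1) * expGap ((n + 1 : ℕ) * t)| ≤ M * expGap t := by
  simpa using abs_sum_mul_le_of_antitone hM (antitone_expGap_mul ht)
    (fun n ↦ expGap_nonneg (by positivity)) N

lemma abs_div_sub_divisorSumExp_le (hc : ∀ n, c n = 0 ∨ c n = 1 ∨ c n = -1)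
    (hM : ∀ N, |∑ n ∈ Finset.range N, c (n + 1)| ≤ M)
    (hL : Tendsto (fun N ↦ ∑ n ∈ Finset.range N, c (n + 1) / (n + 1 : ℕ)) atTop (𝓝 L))
    {t : ℝ} (ht : 0 < t) :
    |L / t - divisorSumExp c t| ≤ M * expGap t :=
  le_of_tendsto' (tendsto_sum_mul_expGap hc hL ht).abs (abs_sum_mul_expGap_le hM ht)

lemma abs_div_sub_divisorSumExp_le' (hc : ∀ n, c n = 0 ∨ c n = 1 ∨ c n = -1)
    (hM : ∀ N, |∑ n ∈ Finset.range N, c (n + 1)| ≤ M)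
    (hL : Tendsto (fun N ↦ ∑ n ∈ Finset.range N, c (n + 1) / (n + 1 : ℕ)) atTop (𝓝 L))
    {t : ℝ} (ht : 0 < t) :
    |L / t - divisorSumExp c t| ≤ M := by
  have hM0 : 0 ≤ M := (abs_nonneg _).trans (hM 0)
  exact (abs_div_sub_divisorSumExp_le hc hM hL ht).trans
    (mul_le_of_le_one_right hM0 (expGap_le_one ht))

/-- A lower bound for `∑ c n / n` in terms of a bound for the partial sums of `c`. -/
lemma one_le_mul_mul_sum_div (hc : ∀ n, c n = 0 ∨ c n = 1 ∨ c n = -1) (hM1 : 1 ≤ M)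
    (hM : ∀ N, |∑ n ∈ Finset.range N, c (n + 1)| ≤ M)
    (hL : Tendsto (fun N ↦ ∑ n ∈ Finset.range N, c (n + 1) / (n + 1 : ℕ)) atTop (𝓝 L)) :
    1 ≤ 60 * M * L := by
  set N := ⌈6 * M⌉₊ with hN
  have hN1 : 6 * M ≤ N := Nat.le_ceil _
  have hN2 : (N : ℝ) ≤ 7 * M := by
    have := Nat.ceil_lt_add_one (by linarith : 0 ≤ 6 * M); rw [← hN] at this; linarith
  have hN0 : (0 : ℝ) < N := by linarith
  have ht : (0 : ℝ) < 1 / N ^ 2 := by positivity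
  have hf := (abs_le.1 (abs_div_sub_divisorSumExp_le' hc hM hL ht)).1
  have hsum : (N : ℝ) / 3 ≤ divisorSumExp c (1 / N ^ 2) := by
    have hinj : Set.InjOn (fun m : ℕ ↦ (m + 1) ^ 2 - 1) (Finset.range N) := by
      intro a _ b _ hab
      have h1 : 1 ≤ (a + 1) ^ 2 := Nat.one_le_pow _ _ (by omega)
      have h2 : 1 ≤ (b + 1) ^ 2 := Nat.one_le_pow _ _ (by omega)
      have : (a + 1) ^ 2 = (b + 1) ^ 2 := by simp only at hab; omega
      have := Nat.pow_left_injective (two_ne_zero) this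
      omega
    calc (N : ℝ) / 3 = ∑ m ∈ Finset.range N, (1 / 3 : ℝ) := by simp; ring
      _ ≤ ∑ m ∈ Finset.range N, divisorSum c ((m + 1) ^ 2 - 1 + 1) *
            Real.exp (-(((m + 1) ^ 2 - 1 + 1 : ℕ) * (1 / N ^ 2))) := by
          refine Finset.sum_le_sum fun m hm ↦ ?_
          rw [Nat.sub_add_cancel (Nat.one_le_pow _ _ (by omega))]
          have h1 := one_le_divisorSum_sq hc (Nat.succ_ne_zero m)
          have h2 : ((m + 1 : ℕ) : ℝ) ≤ N := by exact_mod_cast Finset.mem_range.1 hm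
          have h3 : (((m + 1) ^ 2 : ℕ) : ℝ) * (1 / N ^ 2) ≤ 1 := by
            rw [mul_one_div, div_le_one (by positivity)]
            push_cast at h2 ⊢
            gcongr
          have h4 : (1 / 3 : ℝ) ≤ Real.exp (-1) := by
            rw [Real.exp_neg, one_div]
            have := Real.exp_one_lt_d9
            gcongr
            linarith
          calc (1 / 3 : ℝ) ≤ 1 * Real.exp (-1) := by linarith
            _ ≤ _ := by gcongr
      _ = ∑ n ∈ (Finset.range N).image (fun m : ℕ ↦ (m + 1) ^ 2 - 1), divisorSum c (n + 1) *
            Real.exp (-((n + 1 : ℕ) * (1 / N ^ 2))) := by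
          rw [Finset.sum_image hinj]
      _ ≤ _ := (summable_divisorSumExp hc ht).sum_le_tsum _
          fun n _ ↦ mul_nonneg (divisorSum_nonneg hc _) (Real.exp_pos _).le
  rw [div_div_eq_mul_div, div_one] at hf
  have h5 : (N : ℝ) / 6 ≤ L * N ^ 2 := by linarith
  have h6 : 1 ≤ 6 * L * N := by
    by_contra! h
    nlinarith
  have hL0 : 0 < L := by
    by_contra! h
    nlinarith
  nlinarith

end meanValue

section mellin
variable {c : ℕ →*₀ ℝ} {M L β : ℝ}

lemma integrableOn_expGap_mul_rpow (hβ0 : 0 < β) (hβ1 : β < 1) :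
    IntegrableOn (fun t ↦ expGap t * t ^ (β - 1)) (Set.Ioi 0) := by
  have hmeas : AEStronglyMeasurable (fun t ↦ expGap t * t ^ (β - 1))
      (volume.restrict (Set.Ioi 0)) :=
    (continuousOn_expGap.mul fun t ht ↦ (Real.continuousAt_rpow_const t _
      (Or.inl (Set.mem_Ioi.1 ht).ne')).continuousWithinAt).aestronglyMeasurable measurableSet_Ioi
  rw [← Set.Ioc_union_Ioi_eq_Ioi zero_le_one]
  refine IntegrableOn.union ?_ ?_
  · have h : IntegrableOn (fun t : ℝ ↦ t ^ (β - 1)) (Set.Ioc 0 1) :=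
      (intervalIntegrable_iff_integrableOn_Ioc_of_le zero_le_one).1
        (intervalIntegral.intervalIntegrable_rpow' (by linarith))
    refine h.mono' (hmeas.mono_set Set.Ioc_subset_Ioi_self) ?_
    refine (ae_restrict_iff' measurableSet_Ioc).2 (ae_of_all _ fun t ht ↦ ?_)
    have h1 := expGap_nonneg ht.1
    have h2 := Real.rpow_nonneg ht.1.le (β - 1)
    rw [Real.norm_of_nonneg (mul_nonneg h1 h2)]
    exact mul_le_of_le_one_left h2 (expGap_le_one ht.1)
  · refine (integrableOn_Ioi_rpow_of_lt (by linarith : β - 2 < -1) one_pos).mono'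
      (hmeas.mono_set (Set.Ioi_subset_Ioi zero_le_one)) ?_
    refine (ae_restrict_iff' measurableSet_Ioi).2 (ae_of_all _ fun t ht ↦ ?_)
    have ht0 : 0 < t := zero_lt_one.trans ht
    have h1 := expGap_nonneg ht0
    have h2 := Real.rpow_nonneg ht0.le (β - 1)
    rw [Real.norm_of_nonneg (mul_nonneg h1 h2), show β - 2 = -1 + (β - 1) by ring,
      Real.rpow_add ht0, Real.rpow_neg_one]
    gcongr
    exact expGap_le_inv ht0

lemma expGap_mul_rpow_comp_mul {b t : ℝ} (hb : 0 < b) (ht : 0 < t) :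
    expGap (b * t) * t ^ (β - 1) = b ^ (1 - β) * (expGap (b * t) * (b * t) ^ (β - 1)) := by
  rw [Real.mul_rpow hb.le ht.le]
  have : b ^ (1 - β) * b ^ (β - 1) = 1 := by rw [← Real.rpow_add hb]; simp
  linear_combination (-(expGap (b * t) * t ^ (β - 1))) * this

lemma integrableOn_expGap_comp_mul {b : ℝ} (hb : 0 < b) (hβ0 : 0 < β) (hβ1 : β < 1) :
    IntegrableOn (fun t ↦ expGap (b * t) * t ^ (β - 1)) (Set.Ioi 0) := by
  have h := integrableOn_expGap_mul_rpow hβ0 hβ1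
  rw [← mul_zero b, ← integrableOn_Ioi_comp_mul_left_iff _ _ hb] at h
  exact IntegrableOn.congr_fun (h.const_mul (b ^ (1 - β)))
    (fun t ht ↦ (expGap_mul_rpow_comp_mul hb ht).symm) measurableSet_Ioi

lemma integral_expGap_comp_mul {b : ℝ} (hb : 0 < b) :
    ∫ t in Set.Ioi 0, expGap (b * t) * t ^ (β - 1) =
      b ^ (-β) * ∫ t in Set.Ioi 0, expGap t * t ^ (β - 1) := by
  rw [setIntegral_congr_fun measurableSet_Ioi
    (fun t ht ↦ expGap_mul_rpow_comp_mul (β := β) hb ht), integral_const_mul,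
    integral_comp_mul_left_Ioi (fun u ↦ expGap u * u ^ (β - 1)) 0 hb, mul_zero, smul_eq_mul,
    ← mul_assoc, ← Real.rpow_neg_one b, ← Real.rpow_add hb]
  ring_nf

/-- If `∑ c n / n ^ β = 0`, then the Mellin transform at `β` of the error term in
the approximation `∑ (1 * c)(n) exp (-n t) ≈ L / t` vanishes. -/
lemma integral_div_sub_divisorSumExp_eq_zero (hc : ∀ n, c n = 0 ∨ c n = 1 ∨ c n = -1)
    (hM : ∀ N, |∑ n ∈ Finset.range N, c (n + 1)| ≤ M)
    (hL : Tendsto (fun N ↦ ∑ n ∈ Finset.range N, c (n + 1) / (n + 1 : ℕ)) atTop (𝓝 L))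
    (hβ0 : 0 < β) (hβ1 : β < 1)
    (hz : Tendsto (fun N ↦ ∑ n ∈ Finset.range N, c (n + 1) * ((n + 1 : ℕ) : ℝ) ^ (-β)) atTop
      (𝓝 0)) :
    IntegrableOn (fun t ↦ (L / t - divisorSumExp c t) * t ^ (β - 1)) (Set.Ioi 0) ∧
      ∫ t in Set.Ioi 0, (L / t - divisorSumExp c t) * t ^ (β - 1) = 0 := by
  set F : ℕ → ℝ → ℝ := fun N t ↦ ∑ n ∈ Finset.range N,
    c (n + 1) * (expGap ((n + 1 : ℕ) * t) * t ^ (β - 1)) with hF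
  have hFint : ∀ N, IntegrableOn (F N) (Set.Ioi 0) := fun N ↦
    integrable_finsetSum _ fun n _ ↦
      (integrableOn_expGap_comp_mul (by positivity) hβ0 hβ1).const_mul _
  have hFeq : ∀ N t, F N t =
      (∑ n ∈ Finset.range N, c (n + 1) * expGap ((n + 1 : ℕ) * t)) * t ^ (β - 1) := fun N t ↦ by
    simp only [hF, Finset.sum_mul, mul_assoc]
  have hlim : ∀ᵐ t ∂volume.restrict (Set.Ioi (0 : ℝ)), Tendsto (fun N ↦ F N t) atTop
      (𝓝 ((L / t - divisorSumExp c t) * t ^ (β - 1))) := by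
    refine (ae_restrict_iff' measurableSet_Ioi).2 (ae_of_all _ fun t ht ↦ ?_)
    simp only [hFeq]
    exact (tendsto_sum_mul_expGap hc hL ht).mul_const _
  have hmeas := aestronglyMeasurable_of_tendsto_ae _ (fun N ↦ (hFint N).aestronglyMeasurable) hlim
  have hbd := (integrableOn_expGap_mul_rpow hβ0 hβ1).const_mul M
  constructor
  · refine hbd.mono' hmeas ((ae_restrict_iff' measurableSet_Ioi).2 (ae_of_all _ fun t ht ↦ ?_))
    rw [norm_mul, Real.norm_of_nonneg (Real.rpow_nonneg (le_of_lt ht) _), ← mul_assoc]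
    have := Real.rpow_nonneg (le_of_lt ht) (β - 1)
    gcongr
    exact abs_div_sub_divisorSumExp_le hc hM hL ht
  · have h1 := tendsto_integral_of_dominated_convergence _
      (fun N ↦ (hFint N).aestronglyMeasurable) hbd (fun N ↦ ?_) hlim
    · refine tendsto_nhds_unique h1 ?_
      have h2 := hz.mul_const (∫ t in Set.Ioi 0, expGap t * t ^ (β - 1))
      rw [zero_mul] at h2
      refine h2.congr fun N ↦ ?_
      rw [integral_finsetSum _ fun n _ ↦
        (integrableOn_expGap_comp_mul (by positivity) hβ0 hβ1).const_mul _, Finset.sum_mul]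
      refine Finset.sum_congr rfl fun n _ ↦ ?_
      rw [integral_const_mul, integral_expGap_comp_mul (by positivity), mul_assoc]
    · refine (ae_restrict_iff' measurableSet_Ioi).2 (ae_of_all _ fun t ht ↦ ?_)
      have := Real.rpow_nonneg (le_of_lt ht) (β - 1)
      rw [hFeq, norm_mul, Real.norm_of_nonneg this, ← mul_assoc]
      gcongr
      exact abs_sum_mul_expGap_le hM ht N

lemma divisorSumExp_le_sum_add (hc : ∀ n, c n = 0 ∨ c n = 1 ∨ c n = -1) {δ t : ℝ} (hδ : 0 < δ)
    (ht : δ < t) (N : ℕ) :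
    divisorSumExp c t ≤
      ∑ n ∈ Finset.range N, divisorSum c (n + 1) * Real.exp (-((n + 1 : ℕ) * t)) +
        divisorSumExp c (δ / 2) * Real.exp ((N + 1 : ℕ) * (δ / 2)) *
          Real.exp (-((N + 1 : ℕ) * t)) := by
  have hs := summable_divisorSumExp hc (hδ.trans ht)
  have hs' := summable_divisorSumExp hc (half_pos hδ)
  rw [divisorSumExp, ← hs.sum_add_tsum_nat_add N]
  gcongr
  have h1 : ∑' n : ℕ, divisorSum c (n + N + 1) * Real.exp (-((n + N + 1 : ℕ) * (δ / 2))) ≤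
      divisorSumExp c (δ / 2) := by
    rw [divisorSumExp, ← hs'.sum_add_tsum_nat_add N]
    exact le_add_of_nonneg_left (Finset.sum_nonneg fun n _ ↦
      mul_nonneg (divisorSum_nonneg hc _) (Real.exp_pos _).le)
  calc _ ≤ ∑' n : ℕ, divisorSum c (n + N + 1) * Real.exp (-((n + N + 1 : ℕ) * (δ / 2))) *
        (Real.exp ((N + 1 : ℕ) * (δ / 2)) * Real.exp (-((N + 1 : ℕ) * t))) := by
        refine Summable.tsum_le_tsum (fun n ↦ ?_) ((summable_nat_add_iff N).2 hs)
          (((summable_nat_add_iff N).2 hs').mul_right _)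
        rw [mul_assoc, ← Real.exp_add, ← Real.exp_add]
        refine mul_le_mul_of_nonneg_left (Real.exp_le_exp.2 ?_) (divisorSum_nonneg hc _)
        push_cast
        nlinarith [mul_nonneg (Nat.cast_nonneg (α := ℝ) n) (by linarith : 0 ≤ t - δ / 2)]
    _ ≤ _ := by
        rw [tsum_mul_right, mul_assoc (divisorSumExp c (δ / 2))]
        gcongr

/-- Lower bound for a logarithmic sum of `1 * c` coming from a zero `β`. -/
lemma div_one_sub_le_sum_add (hc : ∀ n, c n = 0 ∨ c n = 1 ∨ c n = -1)
    (hM : ∀ N, |∑ n ∈ Finset.range N, c (n + 1)| ≤ M)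
    (hL : Tendsto (fun N ↦ ∑ n ∈ Finset.range N, c (n + 1) / (n + 1 : ℕ)) atTop (𝓝 L))
    (hβ0 : 0 < β) (hβ1 : β < 1)
    (hz : Tendsto (fun N ↦ ∑ n ∈ Finset.range N, c (n + 1) * ((n + 1 : ℕ) : ℝ) ^ (-β)) atTop
      (𝓝 0)) {δ : ℝ} (hδ : 0 < δ) (N : ℕ) :
    L / (1 - β) ≤ ∑ n ∈ Finset.range N,
        divisorSum c (n + 1) * (Real.exp (-((n + 1 : ℕ) * δ)) / (n + 1 : ℕ)) +
      divisorSumExp c (δ / 2) * (Real.exp (-((N + 1 : ℕ) * (δ / 2))) / (N + 1 : ℕ)) +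
      M * δ / β := by
  obtain ⟨hinteg, hzero⟩ := integral_div_sub_divisorSumExp_eq_zero hc hM hL hβ0 hβ1 hz
  have hM0 : 0 ≤ M := (abs_nonneg _).trans (hM 0)
  have hinteg1 := hinteg.mono_set (Set.Ioc_subset_Ioi_self : Set.Ioc 0 δ ⊆ Set.Ioi 0)
  have hinteg2 := hinteg.mono_set (Set.Ioi_subset_Ioi hδ.le)
  rw [← Set.Ioc_union_Ioi_eq_Ioi hδ.le, setIntegral_union (Set.Ioc_disjoint_Ioi le_rfl)
    measurableSet_Ioi hinteg1 hinteg2] at hzero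
  set A := divisorSumExp c (δ / 2) * Real.exp ((N + 1 : ℕ) * (δ / 2)) with hA
  set w := δ ^ (β - 1) with hw
  have hw0 : 0 < w := Real.rpow_pos_of_pos hδ _
  set R : ℝ → ℝ := fun t ↦ ∑ n ∈ Finset.range N, divisorSum c (n + 1) *
    Real.exp (-((n + 1 : ℕ)) * t) + A * Real.exp (-((N + 1 : ℕ)) * t) with hR
  have hneg : ∀ n : ℕ, -((n + 1 : ℕ) : ℝ) < 0 := fun n ↦ neg_neg_of_pos (by positivity)
  have hRint1 : ∀ n ∈ Finset.range N, IntegrableOn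
      (fun t ↦ divisorSum c (n + 1) * Real.exp (-((n + 1 : ℕ)) * t)) (Set.Ioi δ) := fun n _ ↦
    (integrableOn_exp_mul_Ioi (hneg n) δ).const_mul _
  have hRint2 : IntegrableOn (fun t ↦ A * Real.exp (-((N + 1 : ℕ)) * t)) (Set.Ioi δ) :=
    (integrableOn_exp_mul_Ioi (hneg N) δ).const_mul _
  have hRint : IntegrableOn R (Set.Ioi δ) := (integrable_finsetSum _ hRint1).add hRint2
  have hRval : ∫ t in Set.Ioi δ, R t = ∑ n ∈ Finset.range N,
        divisorSum c (n + 1) * (Real.exp (-((n + 1 : ℕ) * δ)) / (n + 1 : ℕ)) +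
      divisorSumExp c (δ / 2) * (Real.exp (-((N + 1 : ℕ) * (δ / 2))) / (N + 1 : ℕ)) := by
    rw [hR, integral_add (integrable_finsetSum _ hRint1) hRint2, integral_finsetSum _ hRint1]
    congr 1
    · refine Finset.sum_congr rfl fun n _ ↦ ?_
      rw [integral_const_mul, integral_exp_mul_Ioi (hneg n), neg_div_neg_eq, neg_mul]
    · rw [integral_const_mul, integral_exp_mul_Ioi (hneg N), neg_div_neg_eq, hA, mul_assoc,
        ← mul_div_assoc, ← Real.exp_add]
      ring_nf
  have hpint : IntegrableOn (fun t : ℝ ↦ t ^ (β - 2)) (Set.Ioi δ) :=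
    integrableOn_Ioi_rpow_of_lt (by linarith) hδ
  have h2 : L * (w / (1 - β)) - w * ∫ t in Set.Ioi δ, R t ≤
      ∫ t in Set.Ioi δ, (L / t - divisorSumExp c t) * t ^ (β - 1) := by
    have hp : ∫ t in Set.Ioi δ, t ^ (β - 2) = w / (1 - β) := by
      rw [integral_Ioi_rpow_of_lt (by linarith) hδ, show β - 2 + 1 = β - 1 by ring, neg_div,
        ← div_neg, neg_sub]
    rw [← hp, ← integral_const_mul, ← integral_const_mul,
      ← integral_sub (hpint.const_mul L) (hRint.const_mul w)]
    refine setIntegral_mono_on ((hpint.const_mul L).sub (hRint.const_mul w)) hinteg2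
      measurableSet_Ioi fun t ht ↦ ?_
    have ht' : δ < t := ht
    have ht0 : 0 < t := hδ.trans ht
    have hf : divisorSumExp c t ≤ R t := by
      simpa only [hR, neg_mul] using divisorSumExp_le_sum_add hc hδ ht' N
    have hf0 : 0 ≤ divisorSumExp c t :=
      tsum_nonneg fun n ↦ mul_nonneg (divisorSum_nonneg hc _) (Real.exp_pos _).le
    have hwt : t ^ (β - 1) ≤ w :=
      Real.rpow_le_rpow_of_nonpos hδ ht'.le (by linarith)
    have hmul : divisorSumExp c t * t ^ (β - 1) ≤ R t * w :=
      mul_le_mul hf hwt (Real.rpow_nonneg ht0.le _) (hf0.trans hf)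
    have ht2 : t ^ (β - 2) = t ^ (β - 1) / t := by
      rw [show β - 2 = β - 1 - 1 by ring, Real.rpow_sub_one ht0.ne']
    rw [ht2, sub_mul, div_mul_eq_mul_div, mul_div_assoc']
    linarith
  have h1 : -(M * (w * δ / β)) ≤
      ∫ t in Set.Ioc 0 δ, (L / t - divisorSumExp c t) * t ^ (β - 1) := by
    have hpint1 : IntegrableOn (fun t : ℝ ↦ t ^ (β - 1)) (Set.Ioc 0 δ) :=
      (intervalIntegrable_iff_integrableOn_Ioc_of_le hδ.le).1
        (intervalIntegral.intervalIntegrable_rpow' (by linarith))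
    have hp : ∫ t in Set.Ioc 0 δ, t ^ (β - 1) = w * δ / β := by
      rw [← intervalIntegral.integral_of_le hδ.le, integral_rpow (Or.inl (by linarith)),
        sub_add_cancel, Real.zero_rpow hβ0.ne', sub_zero, hw, ← Real.rpow_add_one hδ.ne',
        sub_add_cancel]
    rw [← hp, ← neg_mul, ← integral_const_mul]
    refine setIntegral_mono_on (hpint1.const_mul _) hinteg1 measurableSet_Ioc fun t ht ↦ ?_
    have := Real.rpow_nonneg ht.1.le (β - 1)
    gcongr
    exact (abs_le.1 (abs_div_sub_divisorSumExp_le' hc hM hL ht.1)).1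
  rw [← hRval]
  have h3 : w * (L / (1 - β)) ≤ w * ((∫ t in Set.Ioi δ, R t) + M * δ / β) := by
    have e1 : L * (w / (1 - β)) = w * (L / (1 - β)) := by ring
    have e2 : M * (w * δ / β) = w * (M * δ / β) := by ring
    rw [e1] at h2
    rw [e2] at h1
    rw [mul_add]
    linarith
  exact le_of_mul_le_mul_left h3 hw0

end mellin

section combine
variable {c : ℕ →*₀ ℝ} {M L β : ℝ}

lemma sum_mul_exp_le_div_add (hc : ∀ n, c n = 0 ∨ c n = 1 ∨ c n = -1)
    (hM : ∀ N, |∑ n ∈ Finset.range N, c (n + 1)| ≤ M)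
    (hL : Tendsto (fun N ↦ ∑ n ∈ Finset.range N, c (n + 1) / (n + 1 : ℕ)) atTop (𝓝 L))
    {S : Finset ℕ} (hS : ∀ m ∈ S, m ≠ 0) {t : ℝ} (ht : 0 < t) :
    ∑ m ∈ S, divisorSum c m * Real.exp (-(m * t)) ≤ L / t + M := by
  have h1 : ∑ m ∈ S, divisorSum c m * Real.exp (-(m * t)) ≤ divisorSumExp c t := by
    have h2 := (summable_divisorSumExp hc ht).sum_le_tsum (S.image (· - 1)) fun n _ ↦
      mul_nonneg (divisorSum_nonneg hc _) (Real.exp_nonneg _)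
    rw [Finset.sum_image] at h2
    · refine le_trans (Finset.sum_le_sum fun m hm ↦ ?_) h2
      rw [Nat.sub_add_cancel (Nat.one_le_iff_ne_zero.2 (hS m hm))]
    · intro a ha b hb hab
      have := hS a ha
      have := hS b hb
      simp only at hab
      lia
  have h3 := abs_le.1 (abs_div_sub_divisorSumExp_le' hc hM hL ht)
  linarith

lemma sum_divisorSum_div_mul_exp_sub_exp_le (hc : ∀ n, c n = 0 ∨ c n = 1 ∨ c n = -1)
    (hM : ∀ N, |∑ n ∈ Finset.range N, c (n + 1)| ≤ M)
    (hL : Tendsto (fun N ↦ ∑ n ∈ Finset.range N, c (n + 1) / (n + 1 : ℕ)) atTop (𝓝 L))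
    {S : Finset ℕ} (hS : ∀ m ∈ S, m ≠ 0) {a b : ℝ} (ha : 0 < a) (hab : a ≤ b) :
    ∑ m ∈ S, divisorSum c m / m * (Real.exp (-(m * a)) - Real.exp (-(m * b))) ≤
      L * (Real.log b - Real.log a) + M * (b - a) := by
  have hd : ∀ t : ℝ, 0 < t → HasDerivAt (fun t : ℝ ↦ L * Real.log t + M * t +
      ∑ m ∈ S, divisorSum c m / m * Real.exp (-(m * t)))
      (L * t⁻¹ + M * 1 + ∑ m ∈ S, divisorSum c m / m * (Real.exp (-(m * t)) * (-(m * 1)))) t := by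
    intro t ht
    refine (((Real.hasDerivAt_log ht.ne').const_mul L).add ((hasDerivAt_id t).const_mul M)).add ?_
    refine HasDerivAt.fun_sum fun m _ ↦ ?_
    exact (((hasDerivAt_id t).const_mul (m : ℝ)).neg.exp).const_mul _
  have hmono : MonotoneOn (fun t : ℝ ↦ L * Real.log t + M * t +
      ∑ m ∈ S, divisorSum c m / m * Real.exp (-(m * t))) (Set.Ioi 0) := by
    refine monotoneOn_of_deriv_nonneg (convex_Ioi 0)
      (fun t ht ↦ (hd t ht).continuousAt.continuousWithinAt) (fun t ht ↦ ?_) (fun t ht ↦ ?_) <;>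
      rw [interior_Ioi] at ht
    · exact (hd t ht).differentiableAt.differentiableWithinAt
    · rw [(hd t ht).deriv]
      have h := sum_mul_exp_le_div_add hc hM hL hS ht
      have h2 : ∑ m ∈ S, divisorSum c m / m * (Real.exp (-(m * t)) * (-(m * 1))) =
          -∑ m ∈ S, divisorSum c m * Real.exp (-(m * t)) := by
        rw [← Finset.sum_neg_distrib]
        refine Finset.sum_congr rfl fun m hm ↦ ?_
        have : (m : ℝ) ≠ 0 := Nat.cast_ne_zero.2 (hS m hm)
        field_simp
      rw [h2, ← div_eq_mul_inv]
      linarith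
  have h := hmono (Set.mem_Ioi.2 ha) (Set.mem_Ioi.2 (ha.trans_le hab)) hab
  simp only [mul_sub, Finset.sum_sub_distrib] at h ⊢
  linarith

/-- The products `p * n` with `p ≥ Q` prime and `n < Q` are pairwise distinct. -/
lemma injOn_mul_prime_lt {Q : ℕ} {P : Finset ℕ} (hP : ∀ p ∈ P, p.Prime ∧ Q ≤ p) :
    Set.InjOn (fun z : ℕ × ℕ ↦ z.1 * z.2) (P ×ˢ Finset.Ico 1 Q : Finset (ℕ × ℕ)) := by
  rintro ⟨p, n⟩ h ⟨r, m⟩ h2 heq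
  simp only [Finset.coe_product, Set.mem_prod, Finset.mem_coe, Finset.mem_Ico] at h h2 heq
  obtain ⟨hp, hn1, hn2⟩ := h
  obtain ⟨hr, hm1, hm2⟩ := h2
  have hpr : p = r := by
    have hd : p ∣ r * m := heq ▸ dvd_mul_right p n
    rcases (hP p hp).1.dvd_mul.1 hd with h | h
    · exact (Nat.prime_dvd_prime_iff_eq (hP p hp).1 (hP r hr).1).1 h
    · have := Nat.le_of_dvd (by lia) h
      have := (hP p hp).2
      lia
  subst hpr
  rw [Nat.eq_of_mul_eq_mul_left (hP p hp).1.pos heq]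

lemma sum_prime_mul_sum_eq {Q : ℕ} {P : Finset ℕ} (hP : ∀ p ∈ P, p.Prime ∧ Q ≤ p) :
    (∑ p ∈ P, (1 + c p) / p) * ∑ n ∈ Finset.Ico 1 Q, divisorSum c n / n =
      ∑ m ∈ (P ×ˢ Finset.Ico 1 Q).image (fun z : ℕ × ℕ ↦ z.1 * z.2), divisorSum c m / m := by
  rw [Finset.sum_image (injOn_mul_prime_lt hP), Finset.sum_mul_sum, Finset.sum_product]
  refine Finset.sum_congr rfl fun p hp ↦ Finset.sum_congr rfl fun n hn ↦ ?_
  rw [Finset.mem_Ico] at hn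
  have hcop : p.Coprime n := (hP p hp).1.coprime_iff_not_dvd.2 fun h ↦ by
    have := Nat.le_of_dvd (by lia) h
    have := (hP p hp).2
    lia
  rw [divisorSum_mul hcop, divisorSum_prime (hP p hp).1, div_mul_div_comm, Nat.cast_mul]

lemma exp_neg_two_le : Real.exp (-2) ≤ 1 / 4 := by
  have h : (2 : ℝ) ≤ Real.exp 1 := by linarith [Real.add_one_le_exp 1]
  have : Real.exp (-2) = (Real.exp 1 * Real.exp 1)⁻¹ := by
    rw [← Real.exp_add, ← Real.exp_neg]; norm_num
  rw [this, one_div]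
  gcongr
  nlinarith

lemma sum_divisorSum_div_le_log {Q : ℕ} {x : ℝ} (hc : ∀ n, c n = 0 ∨ c n = 1 ∨ c n = -1)
    (hM : ∀ N, |∑ n ∈ Finset.range N, c (n + 1)| ≤ M)
    (hL : Tendsto (fun N ↦ ∑ n ∈ Finset.range N, c (n + 1) / (n + 1 : ℕ)) atTop (𝓝 L))
    (hQ : 1 ≤ Q) (hx : Q ≤ x) {S : Finset ℕ} (hS : ∀ m ∈ S, (Q : ℝ) ≤ m ∧ m ≤ x * Q) :
    13 / 16 * ∑ m ∈ S, divisorSum c m / m ≤ L * (Real.log x + Real.log 32) + 4 * M / Q := by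
  have hM0 : 0 ≤ M := (abs_nonneg _).trans (hM 0)
  have hQ0 : (1 : ℝ) ≤ Q := by exact_mod_cast hQ
  have hx1 : 1 ≤ x := hQ0.trans hx
  have hS0 : ∀ m ∈ S, m ≠ 0 := fun m hm h ↦ by
    have := (hS m hm).1
    simp only [h, Nat.cast_zero] at this
    linarith
  have ha : 0 < 1 / (8 * (x * Q)) := by positivity
  have hab : 1 / (8 * (x * Q)) ≤ 4 / Q := by
    rw [div_le_div_iff₀ (by positivity) (by positivity)]
    nlinarith
  have h := sum_divisorSum_div_mul_exp_sub_exp_le hc hM hL hS0 ha hab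
  have hlog : Real.log (4 / Q) - Real.log (1 / (8 * (x * Q))) = Real.log x + Real.log 32 := by
    rw [← Real.log_div (by positivity) (by positivity),
      ← Real.log_mul (by positivity) (by norm_num)]
    congr 1
    field_simp
    norm_num
  rw [hlog] at h
  have h2 : M * (4 / Q - 1 / (8 * (x * Q))) ≤ 4 * M / Q := by
    have : 0 ≤ M * (1 / (8 * (x * Q))) := by positivity
    have h5 : M * (4 / Q) = 4 * M / Q := by ring
    rw [mul_sub]; linarith
  have h3 : 13 / 16 * ∑ m ∈ S, divisorSum c m / m ≤ ∑ m ∈ S, divisorSum c m / m *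
      (Real.exp (-(m * (1 / (8 * (x * Q))))) - Real.exp (-(m * (4 / Q)))) := by
    rw [Finset.mul_sum]
    refine Finset.sum_le_sum fun m hm ↦ ?_
    rw [mul_comm]
    refine mul_le_mul_of_nonneg_left ?_ (div_nonneg (divisorSum_nonneg hc m) (by positivity))
    have e1 : (m : ℝ) * (1 / (8 * (x * Q))) ≤ 1 / 8 := by
      rw [mul_one_div, div_le_div_iff₀ (by positivity) (by norm_num)]
      linarith [(hS m hm).2]
    have e2 : 4 ≤ (m : ℝ) * (4 / Q) := by
      rw [mul_div_assoc', le_div_iff₀ (by positivity)]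
      linarith [(hS m hm).1]
    have e3 := Real.one_sub_le_exp_neg ((m : ℝ) * (1 / (8 * (x * Q))))
    have e4 : Real.exp (-(m * (4 / Q))) ≤ 1 / 16 := by
      calc Real.exp (-(m * (4 / Q))) ≤ Real.exp (-2 + -2) := by gcongr; linarith
        _ = Real.exp (-2) * Real.exp (-2) := Real.exp_add _ _
        _ ≤ 1 / 4 * (1 / 4) := by gcongr <;> exact exp_neg_two_le
        _ = 1 / 16 := by norm_num
    linarith
  linarith

lemma le_sum_Ico_divisorSum {Q : ℕ} (hc : ∀ n, c n = 0 ∨ c n = 1 ∨ c n = -1)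
    (hM : ∀ N, |∑ n ∈ Finset.range N, c (n + 1)| ≤ M)
    (hL : Tendsto (fun N ↦ ∑ n ∈ Finset.range N, c (n + 1) / (n + 1 : ℕ)) atTop (𝓝 L))
    (hL0 : 0 < L) (hβ0 : 1 / 2 ≤ β) (hβ1 : β < 1)
    (hz : Tendsto (fun N ↦ ∑ n ∈ Finset.range N, c (n + 1) * ((n + 1 : ℕ) : ℝ) ^ (-β)) atTop (𝓝 0))
    (hQ : 1 ≤ Q) (hMQ : M ≤ 1 / 1000 * L * Q) :
    9 / 10 * (L / (1 - β)) ≤ ∑ n ∈ Finset.Ico 1 Q, divisorSum c n / n := by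
  have hM0 : 0 ≤ M := (abs_nonneg _).trans (hM 0)
  have hQ0 : (1 : ℝ) ≤ Q := by exact_mod_cast hQ
  have h := div_one_sub_le_sum_add hc hM hL (by linarith) hβ1 hz (δ := 4 / Q) (by positivity)
    (Q - 1)
  rw [Nat.sub_add_cancel hQ] at h
  have h1 : ∑ n ∈ Finset.range (Q - 1),
      divisorSum c (n + 1) * (Real.exp (-((n + 1 : ℕ) * (4 / Q))) / (n + 1 : ℕ)) ≤
      ∑ n ∈ Finset.Ico 1 Q, divisorSum c n / n := by
    rw [Finset.sum_Ico_eq_sum_range]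
    refine Finset.sum_le_sum fun n _ ↦ ?_
    rw [add_comm 1 n, div_eq_mul_one_div (divisorSum c _)]
    refine mul_le_mul_of_nonneg_left ?_ (divisorSum_nonneg hc _)
    gcongr
    exact Real.exp_le_one_iff.2 (neg_nonpos.2 (by positivity))
  have hMQ' : M / Q ≤ 1 / 1000 * L := (div_le_iff₀ (by positivity)).2 hMQ
  have h2 : divisorSumExp c (4 / Q / 2) * (Real.exp (-(Q * (4 / Q / 2))) / Q) ≤
      1 / 4 * (L / 2 + M / Q) := by
    have e1 : -((Q : ℝ) * (4 / Q / 2)) = -2 := by field_simp; norm_num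
    have e2 := (abs_le.1 (abs_div_sub_divisorSumExp_le' hc hM hL
      (by positivity : 0 < 4 / (Q : ℝ) / 2))).1
    have e3 : L / (4 / Q / 2) = Q * (L / 2) := by field_simp; norm_num
    rw [e3] at e2
    rw [e1]
    calc _ ≤ (Q * (L / 2) + M) * (1 / 4 / Q) := by
          gcongr
          · linarith
          · exact exp_neg_two_le
      _ = _ := by field_simp
  have h3 : M * (4 / Q) / β ≤ 8 * (M / Q) := by
    rw [div_le_iff₀ (by linarith)]
    have : 0 ≤ M / Q := by positivity
    have e : M * (4 / Q) = 4 * (M / Q) := by ring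
    rw [e]; nlinarith
  have h4 : L ≤ 1 / 2 * (L / (1 - β)) := by
    rw [mul_div_assoc', le_div_iff₀ (by linarith)]
    nlinarith
  linarith

theorem sum_prime_le_of_zero {Q : ℕ} {x : ℝ} {P : Finset ℕ}
    (hc : ∀ n, c n = 0 ∨ c n = 1 ∨ c n = -1)
    (hM : ∀ N, |∑ n ∈ Finset.range N, c (n + 1)| ≤ M)
    (hL : Tendsto (fun N ↦ ∑ n ∈ Finset.range N, c (n + 1) / (n + 1 : ℕ)) atTop (𝓝 L))
    (hL0 : 0 < L) (hβ0 : 1 / 2 ≤ β) (hβ1 : β < 1)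
    (hz : Tendsto (fun N ↦ ∑ n ∈ Finset.range N, c (n + 1) * ((n + 1 : ℕ) : ℝ) ^ (-β)) atTop (𝓝 0))
    (hQ : 1 ≤ Q) (hMQ : M ≤ 1 / 1000 * L * Q) (hx : Q ≤ x) (hlog : 9 ≤ Real.log x)
    (hP : ∀ p ∈ P, p.Prime ∧ Q ≤ p ∧ p ≤ x) :
    ∑ p ∈ P, (1 + c p) / p ≤ 2 * (1 - β) * Real.log x := by
  have hQ0 : (1 : ℝ) ≤ Q := by exact_mod_cast hQ
  have hB := le_sum_Ico_divisorSum hc hM hL hL0 hβ0 hβ1 hz hQ hMQ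
  have hprod := sum_prime_mul_sum_eq (c := c) fun p hp ↦ ⟨(hP p hp).1, (hP p hp).2.1⟩
  have hU := sum_divisorSum_div_le_log hc hM hL hQ hx
    (S := (P ×ˢ Finset.Ico 1 Q).image (fun z : ℕ × ℕ ↦ z.1 * z.2)) (by
      simp only [Finset.mem_image, Finset.mem_product, Finset.mem_Ico, Prod.exists]
      rintro m ⟨p, n, ⟨hp, hn1, hn2⟩, rfl⟩
      have e1 := hP p hp
      have e2 : (1 : ℝ) ≤ n := by exact_mod_cast hn1
      have e3 : (n : ℝ) ≤ Q := by exact_mod_cast hn2.le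
      have e4 : (Q : ℝ) ≤ p := by exact_mod_cast e1.2.1
      push_cast
      constructor <;> nlinarith [e1.2.2])
  rw [← hprod] at hU
  set B := ∑ n ∈ Finset.Ico 1 Q, divisorSum c n / n
  have hP0 : 0 ≤ ∑ p ∈ P, (1 + c p) / p := Finset.sum_nonneg fun p _ ↦
    div_nonneg (by rcases hc p with h | h | h <;> norm_num [h]) (by positivity)
  have hlog32 : Real.log 32 ≤ 3.5 := by
    have : (32 : ℝ) = 2 ^ 5 := by norm_num
    rw [this, Real.log_pow]
    have := Real.log_two_lt_d9
    push_cast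
    linarith
  have hMQ' : 4 * M / Q ≤ 4 / 1000 * L := (div_le_iff₀ (by positivity)).2 (by linarith)
  set s := ∑ p ∈ P, (1 + c p) / p
  have h1 : 13 / 16 * (s * (9 / 10 * (L / (1 - β)))) ≤ L * (Real.log x + 4) := by
    calc 13 / 16 * (s * (9 / 10 * (L / (1 - β)))) ≤ 13 / 16 * (s * B) := by gcongr
      _ ≤ L * (Real.log x + Real.log 32) + 4 * M / Q := hU
      _ ≤ _ := by nlinarith
  have hβ : 0 < 1 - β := by linarith
  have h2 : 13 / 16 * (s * (9 / 10 * (L / (1 - β)))) = L * (117 / 160 * s / (1 - β)) := by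
    ring
  rw [h2] at h1
  have h3 := (div_le_iff₀ hβ).1 (le_of_mul_le_mul_left h1 hL0)
  nlinarith

end combine

section characterSum
variable {q : ℕ} [NeZero q]

open ZMod

lemma sum_norm_sq_dft_mul_le {Φ : ZMod q → ℂ} (hΦ : ∀ j, ‖Φ j‖ ≤ 1) (a : ZMod q) :
    ∑ u, ‖dft Φ (u * a)‖ ^ 2 ≤
      q * ((∑ j, ‖Φ j‖) * (Finset.univ.filter fun v : ZMod q ↦ a * v = 0).card) := by
  have h1 : ((∑ u, ‖dft Φ (u * a)‖ ^ 2 : ℝ) : ℂ) =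
      ∑ m, ∑ n, Φ m * (starRingEnd ℂ) (Φ n) * (if a * (n - m) = 0 then (q : ℂ) else 0) := by
    push_cast
    have h2 : ∀ u, (‖dft Φ (u * a)‖ : ℂ) ^ 2 =
        ∑ m, ∑ n, Φ m * (starRingEnd ℂ) (Φ n) * stdAddChar (u * (a * (n - m))) := by
      intro u
      rw [← Complex.mul_conj', dft_apply, map_sum, Finset.sum_mul_sum]
      refine Finset.sum_congr rfl fun m _ ↦ Finset.sum_congr rfl fun n _ ↦ ?_
      rw [smul_eq_mul, smul_eq_mul, map_mul, ← AddChar.map_neg_eq_conj, neg_neg]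
      have : u * (a * (n - m)) = -(m * (u * a)) + n * (u * a) := by ring
      rw [this, AddChar.map_add_eq_mul]
      ring
    simp_rw [h2]
    rw [Finset.sum_comm]
    refine Finset.sum_congr rfl fun m _ ↦ ?_
    rw [Finset.sum_comm]
    refine Finset.sum_congr rfl fun n _ ↦ ?_
    rw [← Finset.mul_sum, AddChar.sum_mulShift _ (isPrimitive_stdAddChar q), ZMod.card]
    split_ifs <;> simp
  have h3 : ∑ u, ‖dft Φ (u * a)‖ ^ 2 ≤
      ∑ m, ∑ n, ‖Φ m‖ * (if a * (n - m) = 0 then (q : ℝ) else 0) := by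
    have h0 : 0 ≤ ∑ u, ‖dft Φ (u * a)‖ ^ 2 := Finset.sum_nonneg fun _ _ ↦ by positivity
    calc ∑ u, ‖dft Φ (u * a)‖ ^ 2 = ‖((∑ u, ‖dft Φ (u * a)‖ ^ 2 : ℝ) : ℂ)‖ := by
          rw [Complex.norm_real, Real.norm_of_nonneg h0]
      _ ≤ ∑ m, ∑ n, ‖Φ m * (starRingEnd ℂ) (Φ n) * (if a * (n - m) = 0 then (q : ℂ) else 0)‖ := by
          rw [h1]
          exact (norm_sum_le _ _).trans (Finset.sum_le_sum fun m _ ↦ norm_sum_le _ _)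
      _ ≤ _ := by
          refine Finset.sum_le_sum fun m _ ↦ Finset.sum_le_sum fun n _ ↦ ?_
          rw [norm_mul, norm_mul, RCLike.norm_conj]
          split_ifs
          · rw [Complex.norm_natCast]
            have := mul_le_mul_of_nonneg_left (hΦ n) (norm_nonneg (Φ m))
            gcongr
            linarith
          · simp
  refine h3.trans (le_of_eq ?_)
  rw [Finset.sum_mul, Finset.mul_sum]
  refine Finset.sum_congr rfl fun m _ ↦ ?_
  rw [← Finset.mul_sum, Fintype.sum_equiv (Equiv.subRight m)
    (fun n ↦ if a * (n - m) = 0 then (q : ℝ) else 0) (fun v ↦ if a * v = 0 then (q : ℝ) else 0)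
    (fun n ↦ rfl), ← Finset.sum_filter, Finset.sum_const, nsmul_eq_mul]
  ring

lemma norm_dft_unit_mul (χ : DirichletCharacter ℂ q) (u : (ZMod q)ˣ) (a : ZMod q) :
    ‖dft χ (u * a)‖ = ‖dft χ a‖ := by
  have h := dft_comp_unitMul χ u⁻¹ a
  rw [inv_inv] at h
  have h2 : (fun j ↦ χ ((u⁻¹ : (ZMod q)ˣ) * j)) = fun j ↦ χ (u⁻¹ : (ZMod q)ˣ) * χ j := by
    ext j; rw [map_mul]
  rw [← h, h2, dft_const_mul, norm_mul, χ.unit_norm_eq_one, one_mul]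

lemma norm_dft_sq_le (χ : DirichletCharacter ℂ q) {a : ℕ} (ha : 0 < a) :
    ‖dft χ a‖ ^ 2 ≤ q * a := by
  have h := sum_norm_sq_dft_mul_le (Φ := χ) χ.norm_le_one (a : ZMod q)
  have hcard : (Finset.univ.filter fun v : ZMod q ↦ (a : ZMod q) * v = 0).card ≤ a := by
    simpa [nsmul_eq_mul] using IsAddCyclic.card_nsmul_eq_zero_le (α := ZMod q) ha
  have hW : 0 < ∑ j, ‖χ j‖ := Finset.sum_pos' (fun _ _ ↦ norm_nonneg _) ⟨1, by simp⟩
  have h2 : (∑ j, ‖χ j‖) * ‖dft χ a‖ ^ 2 ≤ ∑ u : ZMod q, ‖dft χ (u * a)‖ ^ 2 := by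
    rw [Finset.sum_mul]
    refine Finset.sum_le_sum fun u _ ↦ ?_
    by_cases hu : IsUnit u
    · obtain ⟨u, rfl⟩ := hu
      rw [norm_dft_unit_mul, χ.unit_norm_eq_one, one_mul]
    · rw [χ.map_nonunit hu]
      simp only [norm_zero, zero_mul]
      positivity
  refine le_of_mul_le_mul_left (h2.trans (h.trans ?_)) hW
  calc _ ≤ (q : ℝ) * ((∑ j, ‖χ j‖) * a) := by gcongr
    _ = _ := by ring

lemma sum_norm_dft_sq_le (χ : DirichletCharacter ℂ q) :
    ∑ a, ‖dft χ a‖ ^ 2 ≤ (q : ℝ) ^ 2 := by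
  have h := sum_norm_sq_dft_mul_le (Φ := χ) χ.norm_le_one 1
  simp only [mul_one, one_mul] at h
  have h2 : ∑ j, ‖χ j‖ ≤ q :=
    (Finset.sum_le_sum fun j _ ↦ χ.norm_le_one j).trans (by simp [ZMod.card])
  refine h.trans ?_
  rw [Finset.filter_eq' Finset.univ (0 : ZMod q)]
  simp only [Finset.mem_univ, if_true, Finset.card_singleton, Nat.cast_one, mul_one]
  nlinarith [(Nat.cast_nonneg q : (0 : ℝ) ≤ q)]

lemma norm_sum_stdAddChar_le {k : ZMod q} (hk : k ≠ 0) (N : ℕ) :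
    ‖∑ n ∈ Finset.range N, stdAddChar (k * (n : ZMod q))‖ ≤
      q / 2 * ((k.val : ℝ)⁻¹ + ((-k).val : ℝ)⁻¹) := by
  have hq0 : (0 : ℝ) < q := by exact_mod_cast NeZero.pos q
  have hk1 : 0 < k.val := Nat.pos_of_ne_zero ((ZMod.val_ne_zero k).2 hk)
  have hk2 : k.val < q := ZMod.val_lt k
  have hk1' : (0 : ℝ) < k.val := by exact_mod_cast hk1
  have hk2' : (k.val : ℝ) < q := by exact_mod_cast hk2
  have hneg : ((-k).val : ℝ) = q - k.val := by
    rw [ZMod.neg_val, if_neg hk, Nat.cast_sub hk2.le]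
  have hpow : ∀ n : ℕ, stdAddChar (k * (n : ZMod q)) = stdAddChar k ^ n := fun n ↦ by
    rw [mul_comm, ← nsmul_eq_mul, AddChar.map_nsmul_eq_pow]
  simp_rw [hpow]
  have hne : stdAddChar k ≠ 1 := fun h ↦ hk (injective_stdAddChar (by simpa using h))
  have hsin : ‖stdAddChar k - 1‖ = 2 * |Real.sin (Real.pi * k.val / q)| := by
    have h := stdAddChar_coe (N := q) (k.val : ℤ)
    rw [Int.cast_natCast, ZMod.natCast_zmod_val] at h
    have h2 : 2 * (Real.pi : ℂ) * Complex.I * ((k.val : ℤ) : ℂ) / q =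
        Complex.I * ((2 * (Real.pi * k.val / q) : ℝ) : ℂ) := by
      push_cast; ring
    rw [h, h2, Complex.norm_exp_I_mul_ofReal_sub_one, norm_mul, mul_div_cancel_left₀ _ two_ne_zero]
    simp
  have hlow : (q / 2 * ((k.val : ℝ)⁻¹ + (q - k.val : ℝ)⁻¹))⁻¹ ≤
      Real.sin (Real.pi * k.val / q) := by
    have hpos : (0 : ℝ) < q - k.val := by linarith
    have hpi := Real.pi_pos
    rcases le_total (2 * (k.val : ℝ)) q with h | h
    · have h2 := Real.mul_le_sin (x := Real.pi * k.val / q) (by positivity)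
        ((div_le_div_iff₀ hq0 two_pos).2 (by nlinarith))
      refine le_trans ?_ h2
      have e : 2 / Real.pi * (Real.pi * k.val / q) = (q / 2 * (k.val : ℝ)⁻¹)⁻¹ := by
        field_simp
      rw [e]
      gcongr
      linarith [inv_pos.2 hpos]
    · have h2 := Real.mul_le_sin (x := Real.pi * (q - k.val) / q) (by positivity)
        ((div_le_div_iff₀ hq0 two_pos).2 (by nlinarith))
      have e1 : Real.sin (Real.pi * k.val / q) = Real.sin (Real.pi * (q - k.val) / q) := by
        rw [← Real.sin_pi_sub]
        congr 1
        field_simp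
      rw [e1]
      refine le_trans ?_ h2
      have e : 2 / Real.pi * (Real.pi * (q - k.val) / q) = (q / 2 * (q - k.val : ℝ)⁻¹)⁻¹ := by
        field_simp
      rw [e]
      gcongr
      linarith [inv_pos.2 hk1']
  rw [geom_sum_eq hne, norm_div, hsin, hneg]
  have hnum : ‖stdAddChar k ^ N - 1‖ ≤ 2 := by
    refine (norm_sub_le _ _).trans ?_
    rw [norm_pow, AddChar.norm_apply]
    norm_num
  have hX : 0 < (q / 2 * ((k.val : ℝ)⁻¹ + (q - k.val : ℝ)⁻¹))⁻¹ := by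
    have hpos : (0 : ℝ) < q - k.val := by linarith
    positivity
  rw [abs_of_pos (hX.trans_le hlow)]
  calc _ ≤ 2 / (2 * (q / 2 * ((k.val : ℝ)⁻¹ + (q - k.val : ℝ)⁻¹))⁻¹) := by gcongr
    _ = _ := by rw [div_mul_cancel_left₀ two_ne_zero, inv_inv]

lemma norm_sum_character_le {χ : DirichletCharacter ℂ q} (hχ : χ ≠ 1) (N : ℕ) :
    ‖∑ n ∈ Finset.range N, χ n‖ ≤ ∑ k, ‖dft χ k‖ * (k.val : ℝ)⁻¹ := by
  have hq0 : (0 : ℝ) < q := by exact_mod_cast NeZero.pos q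
  have h0 : dft χ 0 = 0 := by rw [dft_apply_zero]; exact MulChar.sum_eq_zero_of_ne_one hχ
  have hinv : ∀ j : ZMod q, χ j = (q : ℂ)⁻¹ * ∑ k, stdAddChar (k * j) * dft χ k := fun j ↦ by
    have := invDFT_apply (dft χ) j
    simpa [smul_eq_mul] using this
  have h1 : ∑ n ∈ Finset.range N, χ n =
      (q : ℂ)⁻¹ * ∑ k, (∑ n ∈ Finset.range N, stdAddChar (k * (n : ZMod q))) * dft χ k := by
    simp_rw [Finset.sum_mul]
    rw [Finset.sum_comm, Finset.mul_sum]
    exact Finset.sum_congr rfl fun n _ ↦ hinv n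
  have h2 : ∑ k, ‖dft χ k‖ * (((-k).val : ℝ)⁻¹) = ∑ k, ‖dft χ k‖ * (k.val : ℝ)⁻¹ := by
    refine Fintype.sum_equiv (Equiv.neg _) _ _ fun k ↦ ?_
    have := norm_dft_unit_mul χ (-1) k
    simp only [Units.val_neg, Units.val_one, neg_mul, one_mul] at this
    rw [Equiv.neg_apply, this]
  calc ‖∑ n ∈ Finset.range N, χ n‖
      ≤ (q : ℝ)⁻¹ * ∑ k, q / 2 * ((k.val : ℝ)⁻¹ + ((-k).val : ℝ)⁻¹) * ‖dft χ k‖ := by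
        rw [h1, norm_mul, norm_inv, Complex.norm_natCast]
        gcongr
        refine (norm_sum_le _ _).trans (Finset.sum_le_sum fun k _ ↦ ?_)
        rw [norm_mul]
        by_cases hk : k = 0
        · simp [hk, h0]
        · gcongr
          exact norm_sum_stdAddChar_le hk N
    _ = 1 / 2 * (∑ k, ‖dft χ k‖ * (k.val : ℝ)⁻¹ + ∑ k, ‖dft χ k‖ * (((-k).val : ℝ)⁻¹)) := by
        rw [← Finset.sum_add_distrib, Finset.mul_sum, Finset.mul_sum]
        refine Finset.sum_congr rfl fun k _ ↦ ?_
        field_simp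
    _ = _ := by rw [h2]; ring

/-- A weak form of the Pólya–Vinogradov inequality, valid for imprimitive characters as well. -/
theorem norm_sum_character_le_sqrt_add_div {χ : DirichletCharacter ℂ q} (hχ : χ ≠ 1) (N : ℕ)
    {K : ℕ} (hK : 0 < K) :
    ‖∑ n ∈ Finset.range N, χ n‖ ≤ K ^ 2 * √q + 3 / 2 * q / K := by
  have hq0 : (0 : ℝ) < q := by exact_mod_cast NeZero.pos q
  have hK0 : (0 : ℝ) < K := by exact_mod_cast hK
  refine (norm_sum_character_le hχ N).trans ?_
  rw [← Finset.sum_filter_add_sum_filter_not Finset.univ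
    (fun k : ZMod q ↦ k.val ∈ Finset.Icc 1 (K ^ 2))]
  refine add_le_add ?_ ?_
  · calc _ ≤ ∑ k : ZMod q with k.val ∈ Finset.Icc 1 (K ^ 2), √q := by
          refine Finset.sum_le_sum fun k hk ↦ ?_
          rw [Finset.mem_filter, Finset.mem_Icc] at hk
          have hk1 : (1 : ℝ) ≤ k.val := by exact_mod_cast hk.2.1
          have h := norm_dft_sq_le χ hk.2.1
          rw [ZMod.natCast_zmod_val] at h
          rw [← div_eq_mul_inv, div_le_iff₀ (by linarith)]
          refine le_of_sq_le_sq (h.trans ?_) (by positivity)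
          rw [mul_pow, Real.sq_sqrt hq0.le]
          nlinarith
      _ ≤ K ^ 2 * √q := by
          rw [Finset.sum_const, nsmul_eq_mul]
          gcongr
          have h := Finset.card_le_card_of_injOn (ZMod.val (n := q))
            (s := Finset.univ.filter fun k : ZMod q ↦ k.val ∈ Finset.Icc 1 (K ^ 2))
            (t := Finset.Icc 1 (K ^ 2)) (fun k hk ↦ by simpa using hk) (ZMod.val_injective q).injOn
          rw [Nat.card_Icc, Nat.add_sub_cancel] at h
          exact_mod_cast h
  · calc _ ≤ ∑ k : ZMod q with ¬ k.val ∈ Finset.Icc 1 (K ^ 2),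
            (1 / (2 * q * K) * ‖dft χ k‖ ^ 2 + q * K / 2 * ((k.val : ℝ) ^ 2)⁻¹) := by
          refine Finset.sum_le_sum fun k _ ↦ ?_
          have h := sq_nonneg (‖dft χ k‖ - q * K * (k.val : ℝ)⁻¹)
          have e : 1 / (2 * q * K) * ‖dft χ k‖ ^ 2 + q * K / 2 * ((k.val : ℝ) ^ 2)⁻¹ -
              ‖dft χ k‖ * (k.val : ℝ)⁻¹ =
              1 / (2 * q * K) * (‖dft χ k‖ - q * K * (k.val : ℝ)⁻¹) ^ 2 := by
            rw [← inv_pow]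
            field_simp
            ring
          have : 0 ≤ 1 / (2 * q * K) * (‖dft χ k‖ - q * K * (k.val : ℝ)⁻¹) ^ 2 := by positivity
          linarith
      _ ≤ 1 / (2 * q * K) * (q : ℝ) ^ 2 + q * K / 2 * (2 / (K : ℝ) ^ 2) := by
          rw [Finset.sum_add_distrib, ← Finset.mul_sum, ← Finset.mul_sum]
          gcongr
          · exact (Finset.sum_le_sum_of_subset_of_nonneg (Finset.filter_subset _ _)
              fun _ _ _ ↦ by positivity).trans (sum_norm_dft_sq_le χ)
          · have h := sum_Ioo_inv_sq_le (α := ℝ) (K ^ 2) q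
            refine le_trans ?_ (h.trans ?_)
            · rw [← Finset.sum_image (f := fun i : ℕ ↦ ((i : ℝ) ^ 2)⁻¹)
                (ZMod.val_injective q).injOn]
              have hsub : ((Finset.univ.filter fun k : ZMod q ↦
                  ¬ k.val ∈ Finset.Icc 1 (K ^ 2)).image ZMod.val) ⊆
                  insert 0 (Finset.Ioo (K ^ 2) q) := by
                intro i hi
                simp only [Finset.mem_image, Finset.mem_filter, Finset.mem_univ, true_and,
                  Finset.mem_Icc, not_and, not_le] at hi
                obtain ⟨k, hk, rfl⟩ := hi
                rw [Finset.mem_insert, Finset.mem_Ioo]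
                rcases Nat.eq_zero_or_pos k.val with h | h
                · exact Or.inl h
                · exact Or.inr ⟨hk h, ZMod.val_lt k⟩
              refine (Finset.sum_le_sum_of_subset_of_nonneg hsub
                fun _ _ _ ↦ by positivity).trans ?_
              rw [Finset.sum_insert (by simp)]
              simp
            · push_cast
              gcongr
              linarith
      _ = _ := by
          field_simp
          norm_num

end characterSum

section conditionalSeries

lemma tendsto_sum_cpow_mul_of_bounded {f : ℕ → ℂ} {M : ℝ} (hf : f 0 = 0)
    (hO : ∀ n, ‖∑ k ∈ Finset.Icc 0 n, f k‖ ≤ M) {s : ℂ} (hs : 0 < s.re) :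
    Tendsto (fun n : ℕ ↦ ∑ k ∈ Finset.Icc 0 n, (k : ℂ) ^ (-s) * f k) atTop
      (𝓝 (s * mellin (fun t ↦ ∑ k ∈ Finset.Icc 0 ⌊t⌋₊, f k) (-s))) := by
  have hs0 : s ≠ 0 := Complex.ne_zero_of_re_pos hs
  have h₁ : (-s - 1).re + 0 < -1 := by
    simp only [Complex.sub_re, Complex.neg_re, Complex.one_re]; linarith
  have h₃ (t : ℝ) (ht : t ∈ Set.Ici 1) : DifferentiableAt ℝ (fun x : ℝ ↦ (x : ℂ) ^ (-s)) t :=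
    differentiableAt_id.ofReal_cpow_const (zero_lt_one.trans_le ht).ne' (neg_ne_zero.mpr hs0)
  have hO' : (fun n : ℕ ↦ ∑ k ∈ Finset.Icc 0 n, f k) =O[atTop] fun n : ℕ ↦ (n : ℝ) ^ (0 : ℝ) :=
    Asymptotics.IsBigO.of_bound M (Eventually.of_forall fun n ↦ by simpa using hO n)
  have h := tendsto_sum_mul_atTop_nhds_one_sub_integral₀ (f := fun x : ℝ ↦ (x : ℂ) ^ (-s)) (l := 0)
    f hf h₃ ?_ ?_ ?_ (integrableAtFilter_rpow_atTop_iff.mpr h₁)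
  · have hI : s * mellin (fun t ↦ ∑ k ∈ Finset.Icc 0 ⌊t⌋₊, f k) (-s) =
        0 - ∫ t in Set.Ioi (1 : ℝ), deriv (fun x : ℝ ↦ (x : ℂ) ^ (-s)) t *
          ∑ k ∈ Finset.Icc 0 ⌊t⌋₊, f k := by
      rw [zero_sub, ← integral_neg, mellin, ← integral_const_mul]
      rw [← integral_Ici_eq_integral_Ioi (x := (1 : ℝ)),
        setIntegral_eq_of_subset_of_forall_sdiff_eq_zero (s := Set.Ici 1) measurableSet_Ioi
          (Set.Ici_subset_Ioi.2 zero_lt_one)]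
      · refine setIntegral_congr_fun measurableSet_Ici fun t ht ↦ ?_
        rw [Complex.deriv_ofReal_cpow_const (zero_lt_one.trans_le ht).ne' (neg_ne_zero.2 hs0),
          smul_eq_mul]
        ring
      · rintro t ⟨-, ht⟩
        rw [Set.mem_Ici, not_le] at ht
        simp [Nat.floor_eq_zero.2 ht, hf]
    rw [hI]
    exact h
  · refine (Iff.mpr integrableOn_Ici_iff_integrableOn_Ioi <|
      integrableOn_Ioi_deriv_ofReal_cpow zero_lt_one
        (by simpa using! hs)).locallyIntegrableOn
  · have hlim : Tendsto (fun n : ℕ ↦ (n : ℝ) ^ (-(s.re - 0))) atTop (𝓝 0) :=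
      (tendsto_rpow_neg_atTop (by rwa [sub_pos])).comp tendsto_natCast_atTop_atTop
    refine (Asymptotics.IsBigO.mul_atTop_rpow_natCast_of_isBigO_rpow (-s.re) _ _ ?_ hO'
      ?_).trans_tendsto hlim
    · exact Asymptotics.isBigO_norm_left.mp <|
        (Complex.norm_ofReal_cpow_eventually_eq_atTop _).isBigO.natCast_atTop
    · linarith
  · refine .mul_atTop_rpow_of_isBigO_rpow (-(s + 1).re) 0 _ ?_ ?_
      (by rw [← Complex.neg_re, neg_add'])
    · simpa [-neg_add_rev, neg_add'] using! isBigO_deriv_ofReal_cpow_const_atTop _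
    · exact Asymptotics.IsBigO.of_bound M (Eventually.of_forall fun t ↦ by simpa using hO ⌊t⌋₊)

lemma differentiableAt_mellin_of_bounded {f : ℕ → ℂ} {M : ℝ} (hf : f 0 = 0)
    (hO : ∀ n, ‖∑ k ∈ Finset.Icc 0 n, f k‖ ≤ M) {s : ℂ} (hs : 0 < s.re) :
    DifferentiableAt ℂ (mellin fun t ↦ ∑ k ∈ Finset.Icc 0 ⌊t⌋₊, f k) (-s) := by
  refine mellin_differentiableAt_of_isBigO_rpow (a := 0) (b := -s.re - 1) ?_ ?_ (by simpa) ?_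
    (by simp)
  · have h := locallyIntegrableOn_mul_sum_Icc f (m := 0) le_rfl (g := fun _ : ℝ ↦ (1 : ℂ))
      ((locallyIntegrable_const 1).locallyIntegrableOn (Set.Ici 0))
    simpa using h.mono_set Set.Ioi_subset_Ici_self
  · exact Asymptotics.IsBigO.of_bound M (Eventually.of_forall fun t ↦ by simpa using hO ⌊t⌋₊)
  · refine Asymptotics.IsBigO.of_bound 0 ?_
    filter_upwards [Ioo_mem_nhdsGT (zero_lt_one' ℝ)] with t ht
    simp [Nat.floor_eq_zero.2 ht.2, hf]

variable {q : ℕ} [NeZero q]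

lemma LFunction_eq_mul_mellin {χ : DirichletCharacter ℂ q} (hχ : χ ≠ 1)
    (hq : χ (0 : ℕ) = 0) {M : ℝ}
    (hO : ∀ n, ‖∑ k ∈ Finset.Icc 0 n, χ (k : ℕ)‖ ≤ M) {s : ℂ} (hs : 0 < s.re) :
    χ.LFunction s = s * mellin (fun t ↦ ∑ k ∈ Finset.Icc 0 ⌊t⌋₊, χ (k : ℕ)) (-s) := by
  have hopen : IsOpen {z : ℂ | 0 < z.re} := isOpen_lt continuous_const Complex.continuous_re
  have h1 : AnalyticOnNhd ℂ χ.LFunction {z | 0 < z.re} :=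
    (DirichletCharacter.differentiable_LFunction hχ).differentiableOn.analyticOnNhd hopen
  have h2 : AnalyticOnNhd ℂ
      (fun s ↦ s * mellin (fun t ↦ ∑ k ∈ Finset.Icc 0 ⌊t⌋₊, χ (k : ℕ)) (-s)) {z | 0 < z.re} := by
    refine DifferentiableOn.analyticOnNhd (fun z hz ↦ ?_) hopen
    have h := differentiableAt_mellin_of_bounded (f := fun k : ℕ ↦ χ k) hq hO hz
    exact (differentiableAt_id.mul (h.comp z differentiableAt_id.neg)).differentiableWithinAt
  have hpre : IsPreconnected {z : ℂ | 0 < z.re} := (convex_halfSpace_re_gt 0).isPreconnected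
  refine h1.eqOn_of_preconnected_of_eventuallyEq h2 hpre (z₀ := 2) (by simp) ?_ hs
  have hmem : {z : ℂ | 1 < z.re} ∈ 𝓝 (2 : ℂ) :=
    (isOpen_lt continuous_const Complex.continuous_re).mem_nhds (by simp)
  filter_upwards [hmem] with z hz
  have hz1 : 1 < z.re := hz
  rw [DirichletCharacter.LFunction_eq_LSeries χ hz1]
  refine tendsto_nhds_unique ((tendsto_add_atTop_iff_nat 1).mpr
    (χ.LSeriesSummable_of_one_lt_re hz1).hasSum.tendsto_sum_nat) ?_
  refine (tendsto_sum_cpow_mul_of_bounded (f := fun k : ℕ ↦ χ k) hq hO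
    (zero_lt_one.trans hz1)).congr fun n ↦ ?_
  rw [Nat.range_succ_eq_Icc_zero]
  refine Finset.sum_congr rfl fun k _ ↦ ?_
  rw [LSeries.term_def₀ hq, mul_comm]

lemma tendsto_sum_LFunction {χ : DirichletCharacter ℂ q} (hχ : χ ≠ 1)
    (hq : χ (0 : ℕ) = 0) {M : ℝ}
    (hO : ∀ n, ‖∑ k ∈ Finset.range n, χ (k : ℕ)‖ ≤ M) {s : ℝ} (hs : 0 < s) :
    Tendsto (fun N ↦ ∑ n ∈ Finset.range N, (χ (n + 1 : ℕ)).re * ((n + 1 : ℕ) : ℝ) ^ (-s)) atTop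
      (𝓝 (χ.LFunction s).re) := by
  have hO' : ∀ n, ‖∑ k ∈ Finset.Icc 0 n, χ (k : ℕ)‖ ≤ M := fun n ↦ by
    rw [← Nat.range_succ_eq_Icc_zero]; exact hO _
  have hs' : 0 < (s : ℂ).re := by simpa
  have h := tendsto_sum_cpow_mul_of_bounded (f := fun k : ℕ ↦ χ k) hq hO' hs'
  rw [← LFunction_eq_mul_mellin hχ hq hO' hs'] at h
  refine ((Complex.continuous_re.tendsto _).comp h).congr fun N ↦ ?_
  rw [Function.comp_apply, ← Nat.range_succ_eq_Icc_zero, Finset.sum_range_succ', hq, mul_zero,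
    add_zero, Complex.re_sum]
  refine Finset.sum_congr rfl fun n _ ↦ ?_
  have h2 : ((n + 1 : ℕ) : ℂ) ^ (-(s : ℂ)) = ((((n + 1 : ℕ) : ℝ) ^ (-s) : ℝ) : ℂ) := by
    rw [Complex.ofReal_cpow (by positivity)]
    push_cast
    rfl
  rw [h2, Complex.re_ofReal_mul, mul_comm]

end conditionalSeries

lemma sum_odd_inv_le_log {x : ℝ} (hx : 1 ≤ x) {P : Finset ℕ}
    (hP : ∀ p ∈ P, Odd p ∧ 3 ≤ p ∧ p ≤ x) :
    ∑ p ∈ P, (p : ℝ)⁻¹ ≤ 1 / 2 * Real.log x := by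
  have hinj : Set.InjOn (· / 2) (P : Set ℕ) := fun a ha b hb hab ↦ by
    obtain ⟨k, rfl⟩ := (hP a ha).1
    obtain ⟨l, rfl⟩ := (hP b hb).1
    simp only at hab
    lia
  set K := ⌊(x - 1) / 2⌋₊
  have hK : (K : ℝ) ≤ (x - 1) / 2 := Nat.floor_le (by linarith)
  have hle : ∀ p ∈ P, (p : ℝ)⁻¹ ≤
      1 / 2 * (Real.log (2 * (p / 2 : ℕ) + 1) - Real.log (2 * (p / 2 : ℕ) - 1)) := by
    intro p hp
    obtain ⟨k, rfl⟩ := (hP p hp).1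
    have hk : 1 ≤ k := by have := (hP _ hp).2.1; lia
    have hk' : (1 : ℝ) ≤ k := by exact_mod_cast hk
    have e : (2 * k + 1) / 2 = k := by lia
    rw [e, ← Real.log_div (by positivity) (by linarith)]
    have h := Real.one_sub_inv_le_log_of_pos
      (div_pos (by positivity : (0 : ℝ) < 2 * k + 1) (by linarith : (0 : ℝ) < 2 * k - 1))
    have e2 : 1 - ((2 * k + 1 : ℝ) / (2 * k - 1))⁻¹ = 2 * ((2 * k + 1 : ℕ) : ℝ)⁻¹ := by
      push_cast
      rw [inv_div]
      field_simp
      ring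
    linarith
  have hmem : P.image (· / 2) ⊆ Finset.Ico 1 (K + 1) := by
    intro k hk
    obtain ⟨p, hp, rfl⟩ := Finset.mem_image.1 hk
    obtain ⟨l, hl⟩ := (hP p hp).1
    have h3 := (hP p hp).2.1
    have e : p / 2 = l := by lia
    rw [e, Finset.mem_Ico, Nat.lt_succ_iff]
    refine ⟨by lia, Nat.le_floor ?_⟩
    have := (hP p hp).2.2
    rw [hl] at this
    push_cast at this
    linarith
  calc ∑ p ∈ P, (p : ℝ)⁻¹
      ≤ ∑ k ∈ P.image (· / 2),
          1 / 2 * (Real.log (2 * (k : ℕ) + 1) - Real.log (2 * (k : ℕ) - 1)) := by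
        rw [Finset.sum_image hinj]
        exact Finset.sum_le_sum hle
    _ ≤ ∑ k ∈ Finset.Ico 1 (K + 1),
          1 / 2 * (Real.log (2 * (k : ℕ) + 1) - Real.log (2 * (k : ℕ) - 1)) := by
        refine Finset.sum_le_sum_of_subset_of_nonneg hmem fun k hk _ ↦ ?_
        have hk' : (1 : ℝ) ≤ k := by exact_mod_cast (Finset.mem_Ico.1 hk).1
        have := Real.log_le_log (by linarith : (0 : ℝ) < 2 * k - 1)
          (by linarith : (2 * k - 1 : ℝ) ≤ 2 * k + 1)
        linarith
    _ = 1 / 2 * Real.log (2 * K + 1) := by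
        rw [← Finset.mul_sum]
        congr 1
        have h := Finset.sum_Ico_sub (fun k : ℕ ↦ Real.log (2 * k - 1)) (Nat.le_add_left 1 K)
        have e : ∀ k : ℕ, 2 * ((k + 1 : ℕ) : ℝ) - 1 = 2 * k + 1 := fun k ↦ by push_cast; ring
        simp only [e] at h
        rw [h]
        norm_num
    _ ≤ 1 / 2 * Real.log x := by
        gcongr
        linarith

section realCharacter
variable {q : ℕ} {χ : DirichletCharacter ℂ q}

/-- The real part of a real-valued Dirichlet character, as a completely multiplicative function
on the natural numbers. -/
noncomputable def realCoeff [Nontrivial (ZMod q)] (χ : DirichletCharacter ℂ q)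
    (hχ : ∀ n : ZMod q, (χ n).im = 0) : ℕ →*₀ ℝ where
  toFun n := (χ n).re
  map_zero' := by rw [Nat.cast_zero, χ.map_nonunit not_isUnit_zero, Complex.zero_re]
  map_one' := by simp
  map_mul' m n := by simp [hχ]

lemma realCoeff_apply [Nontrivial (ZMod q)] (hχ : ∀ n : ZMod q, (χ n).im = 0) (n : ℕ) :
    realCoeff χ hχ n = (χ n).re := rfl

lemma realCoeff_eq_zero_or [Nontrivial (ZMod q)] (hχ : ∀ n : ZMod q, (χ n).im = 0) (n : ℕ) :
    realCoeff χ hχ n = 0 ∨ realCoeff χ hχ n = 1 ∨ realCoeff χ hχ n = -1 := by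
  rw [realCoeff_apply]
  by_cases hu : IsUnit (n : ZMod q)
  · right
    obtain ⟨u, hu⟩ := hu
    have h := χ.unit_norm_eq_one u
    rw [hu] at h
    have h2 : (χ n).re ^ 2 = 1 := by
      have := Complex.sq_norm (χ n)
      rw [h, Complex.normSq_apply, hχ] at this
      linarith
    simpa using h2
  · left
    rw [χ.map_nonunit hu, Complex.zero_re]

theorem sum_prime_realCharacter_le [NeZero q] (hq : 10 ^ 18 ≤ q) (hχ1 : χ ≠ 1)
    (hχ : ∀ n : ZMod q, (χ n).im = 0) {β : ℝ} (hβ : χ.LFunction (β : ℂ) = 0) {x : ℝ}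
    (hx : (q : ℝ) ^ 2 ≤ x) {P : Finset ℕ} (hP : ∀ p ∈ P, p.Prime ∧ (q : ℝ) ^ 2 ≤ p ∧ p ≤ x) :
    ∑ p ∈ P, (1 + (χ p).re) / p ≤ 2 * (1 - β) * Real.log x := by
  have hqR : (10 : ℝ) ^ 18 ≤ q := by exact_mod_cast hq
  have : Fact (1 < q) := ⟨by lia⟩
  have hβ1 : β < 1 := by
    by_contra h
    exact DirichletCharacter.LFunction_ne_zero_of_one_le_re χ (Or.inl hχ1)
      (by simpa using not_lt.1 h) hβ
  have hx18 : (10 : ℝ) ^ 18 ≤ x := by nlinarith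
  have hlog : 9 ≤ Real.log x := by
    rw [Real.le_log_iff_exp_le (by linarith)]
    calc Real.exp 9 = Real.exp 1 ^ 9 := by rw [← Real.exp_nat_mul]; norm_num
      _ ≤ 3 ^ 9 := by gcongr; exact Real.exp_one_lt_three.le
      _ ≤ x := by linarith
  rcases lt_or_ge β (1 / 2) with hβ2 | hβ2
  · have h := sum_odd_inv_le_log (x := x) (P := P) (by linarith) fun p hp ↦ by
      obtain ⟨h1, h2, h3⟩ := hP p hp
      have h4 : (3 : ℝ) ≤ p := by nlinarith
      have h5 : 3 ≤ p := by exact_mod_cast h4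
      exact ⟨h1.odd_of_ne_two (by lia), h5, h3⟩
    calc ∑ p ∈ P, (1 + (χ p).re) / p ≤ ∑ p ∈ P, 2 * (p : ℝ)⁻¹ := by
          refine Finset.sum_le_sum fun p _ ↦ ?_
          rw [div_eq_mul_inv]
          gcongr
          have := (Complex.re_le_norm (χ p)).trans (χ.norm_le_one p)
          linarith
      _ ≤ Real.log x := by rw [← Finset.mul_sum]; linarith
      _ ≤ _ := by nlinarith
  have hsqrt : (10 : ℝ) ^ 9 ≤ √q := Real.le_sqrt_of_sq_le (by linarith)
  have hbound : ∀ N, ‖∑ n ∈ Finset.range N, χ n‖ ≤ q / 250 := fun N ↦ by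
    have h := norm_sum_character_le_sqrt_add_div hχ1 N (K := 750) (by norm_num)
    have h2 := Real.mul_self_sqrt (Nat.cast_nonneg q : (0 : ℝ) ≤ q)
    push_cast at h
    nlinarith
  have h0 : χ (0 : ℕ) = 0 := by rw [Nat.cast_zero, χ.map_nonunit not_isUnit_zero]
  have hM : ∀ N, |∑ n ∈ Finset.range N, realCoeff χ hχ (n + 1)| ≤ (q : ℝ) / 250 := fun N ↦ by
    refine le_trans ?_ ((Complex.abs_re_le_norm _).trans (hbound (N + 1)))
    rw [Finset.sum_range_succ', h0, add_zero, Complex.re_sum]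
    rfl
  have hL : Tendsto (fun N ↦ ∑ n ∈ Finset.range N, realCoeff χ hχ (n + 1) / (n + 1 : ℕ)) atTop
      (𝓝 (χ.LFunction (1 : ℝ)).re) :=
    (tendsto_sum_LFunction hχ1 h0 hbound one_pos).congr fun N ↦
      Finset.sum_congr rfl fun n _ ↦ by
        rw [Real.rpow_neg_one, realCoeff_apply, div_eq_mul_inv]
  have hz := tendsto_sum_LFunction hχ1 h0 hbound (by linarith : 0 < β)
  rw [hβ, Complex.zero_re] at hz
  have hone := one_le_mul_mul_sum_div (realCoeff_eq_zero_or hχ) (by linarith) hM hL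
  have hL0 : 0 < (χ.LFunction (1 : ℝ)).re := by
    by_contra h
    have : 60 * ((q : ℝ) / 250) * (χ.LFunction (1 : ℝ)).re ≤ 0 :=
      mul_nonpos_of_nonneg_of_nonpos (by positivity) (not_lt.1 h)
    linarith
  refine sum_prime_le_of_zero (c := realCoeff χ hχ) (Q := q ^ 2) (realCoeff_eq_zero_or hχ) hM hL hL0
    hβ2 hβ1 hz (Nat.one_le_pow _ _ (NeZero.pos q)) ?_ (by exact_mod_cast hx) hlog
    fun p hp ↦ ⟨(hP p hp).1, by exact_mod_cast (hP p hp).2.1, (hP p hp).2.2⟩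
  rw [Nat.cast_pow]
  have hq0 : (0 : ℝ) ≤ q := Nat.cast_nonneg q
  calc (q : ℝ) / 250 = q / 250 * 1 := (mul_one _).symm
    _ ≤ q / 250 * (60 * ((q : ℝ) / 250) * (χ.LFunction (1 : ℝ)).re) := by gcongr
    _ ≤ _ := by
      have : 0 ≤ (χ.LFunction (1 : ℝ)).re * (q : ℝ) ^ 2 := by positivity
      linarith

end realCharacter

end

open scoped Classical

/-- **Lemma A4**: for `q` sufficiently large, `χ` a real non-principal
Dirichlet character mod `q` and `β` a real zero of `L(s,χ)`, for every
`x ≥ q²`: `∑_{q² ≤ p ≤ x} (1 + χ(p)) p⁻¹ ≤ 2 (1−β) log x`. -/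
theorem real_character_prime_sum_bound :
    ∃ Q₀ : ℕ, ∀ (q : ℕ) [NeZero q], Q₀ ≤ q →
    ∀ χ : DirichletCharacter ℂ q, χ ≠ 1 → (∀ n : ZMod q, (χ n).im = 0) →
    ∀ β : ℝ, χ.LFunction (β : ℂ) = 0 →
    ∀ x : ℝ, (q : ℝ) ^ (2 : ℕ) ≤ x →
    (∑' p : ℕ, if p.Prime ∧ (q : ℝ) ^ (2 : ℕ) ≤ (p : ℝ) ∧ (p : ℝ) ≤ x then
        (1 + (χ ((p : ZMod q))).re) / (p : ℝ) else 0) ≤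
      2 * (1 - β) * Real.log x := by
  refine ⟨10 ^ 18, fun q _ hq χ hχ1 hχ β hβ x hx ↦ ?_⟩
  rw [tsum_eq_sum (s := Finset.range (⌊x⌋₊ + 1)), ← Finset.sum_filter]
  · exact sum_prime_realCharacter_le hq hχ1 hχ hβ hx fun p hp ↦ (Finset.mem_filter.1 hp).2
  · intro p hp
    rw [if_neg]
    rintro ⟨-, -, h⟩
    exact hp (Finset.mem_range.2 (Nat.lt_succ_of_le (Nat.le_floor h)))
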